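/- (Strengthened Cauchy–Bunyakovsky–Schwarz inequality) Let H be a finite-dimensional real inner product space with inner product ⟨·,·⟩ and induced norm ‖·‖, and let U and V be linear subspaces of H with U ∩ V = {0}. Then there exists a constant γ with 0 ≤ γ < 1, depending only on U and V, such that for all u ∈ U and v ∈ V, |⟨u, v⟩| ≤ γ ‖u‖ ‖v‖. -/

import Mathlib

open scoped RealInnerProductSpace

/-- Nonzero vectors of two subspaces with trivial intersection satisfy the Cauchy–Schwarz
inequality strictly. -/
theorem abs_real_inner_lt_norm_mul_norm_of_inf_eq_bot {H : Type*} [NormedAddCommGroup H]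
    [InnerProductSpace ℝ H] {U V : Submodule ℝ H} (hUV : U ⊓ V = ⊥) {u v : H}
    (hu : u ∈ U) (hv : v ∈ V) (hu₀ : u ≠ 0) (hv₀ : v ≠ 0) : |⟪u, v⟫| < ‖u‖ * ‖v‖ := by
  refine (abs_real_inner_le_norm u v).lt_of_ne fun h => hv₀ ?_
  have hdiv : |⟪u, v⟫ / (‖u‖ * ‖v‖)| = 1 := by
    rw [abs_div, abs_of_nonneg (by positivity : 0 ≤ ‖u‖ * ‖v‖), h, div_self (by positivity)]
  obtain ⟨-, r, -, rfl⟩ := (abs_real_inner_div_norm_mul_norm_eq_one_iff u v).1 hdiv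
  rw [← Submodule.mem_bot ℝ, ← hUV]
  exact ⟨U.smul_mem r hu, hv⟩

/-- Strengthened Cauchy–Bunyakovsky–Schwarz inequality: for subspaces `U`, `V`
of a finite-dimensional real inner product space with trivial intersection,
there is a constant `0 ≤ γ < 1`, depending only on `U` and `V`, with
`|⟪u, v⟫| ≤ γ * ‖u‖ * ‖v‖` for all `u ∈ U`, `v ∈ V`. -/
theorem strengthened_cbs (H : Type*) [NormedAddCommGroup H]
    [InnerProductSpace ℝ H] [FiniteDimensional ℝ H]
    (U V : Submodule ℝ H) (hUV : U ⊓ V = ⊥) :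
    ∃ γ : ℝ, 0 ≤ γ ∧ γ < 1 ∧ ∀ u ∈ U, ∀ v ∈ V, |⟪u, v⟫| ≤ γ * ‖u‖ * ‖v‖ := by
  have hcompact (W : Submodule ℝ H) : IsCompact (Metric.sphere (0 : H) 1 ∩ W) :=
    (isCompact_sphere 0 1).inter_right W.closed_of_finiteDimensional
  have hnormalize {W : Submodule ℝ H} {w : H} (hw : w ∈ W) (hw₀ : w ≠ 0) :
      ‖w‖⁻¹ • w ∈ Metric.sphere (0 : H) 1 ∩ W :=
    ⟨by simp [norm_smul, hw₀], W.smul_mem _ hw⟩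
  rcases ((Metric.sphere (0 : H) 1 ∩ U) ×ˢ (Metric.sphere (0 : H) 1 ∩ V)).eq_empty_or_nonempty
    with hempty | hne
  · refine ⟨0, le_rfl, one_pos, fun u hu v hv => ?_⟩
    rcases eq_or_ne u 0 with rfl | hu₀
    · simp
    rcases eq_or_ne v 0 with rfl | hv₀
    · simp
    exact (hempty.subset (Set.mk_mem_prod (hnormalize hu hu₀) (hnormalize hv hv₀))).elim
  · obtain ⟨⟨u₀, v₀⟩, ⟨⟨hu₀, hu₀U⟩, hv₀, hv₀V⟩, hmax⟩ :=
      ((hcompact U).prod (hcompact V)).exists_isMaxOn hne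
        (f := fun p : H × H => |⟪p.1, p.2⟫|) (by fun_prop)
    refine ⟨|⟪u₀, v₀⟫|, abs_nonneg _, ?_, fun u hu v hv => ?_⟩
    · rw [mem_sphere_zero_iff_norm] at hu₀ hv₀
      simpa [hu₀, hv₀] using abs_real_inner_lt_norm_mul_norm_of_inf_eq_bot hUV hu₀U hv₀V
        (norm_ne_zero_iff.1 (by simp [hu₀])) (norm_ne_zero_iff.1 (by simp [hv₀]))
    · rcases eq_or_ne u 0 with rfl | hu'
      · simp
      rcases eq_or_ne v 0 with rfl | hv'
      · simp
      have hle : |⟪‖u‖⁻¹ • u, ‖v‖⁻¹ • v⟫| ≤ |⟪u₀, v₀⟫| :=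
        hmax (Set.mk_mem_prod (hnormalize hu hu') (hnormalize hv hv'))
      have hu_pos : 0 < ‖u‖ := norm_pos_iff.2 hu'
      have hv_pos : 0 < ‖v‖ := norm_pos_iff.2 hv'
      rw [real_inner_smul_left, real_inner_smul_right, abs_mul, abs_mul, abs_inv, abs_inv,
        abs_norm, abs_norm, inv_mul_le_iff₀ hu_pos, inv_mul_le_iff₀ hv_pos] at hle
      linarith
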